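/- Consider the proportional share allocation rule: given a budget B ≥ 0 and n nonnegative bids sorted in nondecreasing order b_1 ≤ b_2 ≤ … ≤ b_n, let k be the largest index in {1,…,n} such that b_k ≤ B/k (set k = 0 if no such index exists). Then for every subset S of {1,…,n} with Σ_{i∈S} b_i ≤ B, the cardinality of S is at most 2k; i.e., the number of winners of the proportional share rule is a 2-approximation to the maximum number of bidders that can be afforded within budget B. -/

import Mathlib

/-- 2-approximation of the proportional share allocation rule:
with nondecreasing nonnegative bids `b 1 ≤ … ≤ b n`, budget `B ≥ 0`, and `k` the
largest index in `{1,…,n}` with `b k ≤ B / k` (`k = 0` if none exists), every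
subset `S ⊆ {1,…,n}` whose bids sum to at most `B` has cardinality at most `2 * k`. -/
theorem proportional_share_two_approx
    (n k : ℕ) (B : ℝ) (b : ℕ → ℝ)
    (hB : 0 ≤ B)
    (hnonneg : ∀ i, 1 ≤ i → i ≤ n → 0 ≤ b i)
    (hmono : ∀ i j, 1 ≤ i → i ≤ j → j ≤ n → b i ≤ b j)
    (hkn : k ≤ n)
    (hksat : 1 ≤ k → b k ≤ B / (k : ℝ))
    (hkmax : ∀ j, 1 ≤ j → j ≤ n → b j ≤ B / (j : ℝ) → j ≤ k) :
    ∀ S : Finset ℕ, S ⊆ Finset.Icc 1 n → (∑ i ∈ S, b i) ≤ B → S.card ≤ 2 * k := by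
  intro S hS hsum
  by_contra! hc
  have hcard : k + 1 ≤ (S \ Finset.Icc 1 k).card := by
    have h := Finset.le_card_sdiff (Finset.Icc 1 k) S
    rw [Nat.card_Icc] at h
    omega
  have hT : ∀ i ∈ S \ Finset.Icc 1 k, k + 1 ≤ i ∧ i ≤ n := by
    intro i hi
    rw [Finset.mem_sdiff, Finset.mem_Icc] at hi
    have h := Finset.mem_Icc.mp (hS hi.1)
    omega
  obtain ⟨x, hx⟩ : (S \ Finset.Icc 1 k).Nonempty := Finset.card_pos.mp (by omega)
  have hk1 : k + 1 ≤ n := (hT x hx).1.trans (hT x hx).2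
  have hlt : B / ((k + 1 : ℕ) : ℝ) < b (k + 1) := by
    by_contra! h
    have := hkmax (k + 1) (by omega) hk1 h
    omega
  have hpos : (0 : ℝ) < ((k + 1 : ℕ) : ℝ) := by positivity
  rw [div_lt_iff₀ hpos] at hlt
  have h1 : (S \ Finset.Icc 1 k).card • b (k + 1) ≤ ∑ i ∈ S \ Finset.Icc 1 k, b i :=
    Finset.card_nsmul_le_sum _ _ _ fun i hi =>
      hmono (k + 1) i (by omega) (hT i hi).1 (hT i hi).2
  have h2 : ∑ i ∈ S \ Finset.Icc 1 k, b i ≤ ∑ i ∈ S, b i :=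
    Finset.sum_le_sum_of_subset_of_nonneg Finset.sdiff_subset fun i hi _ =>
      hnonneg i (Finset.mem_Icc.mp (hS hi)).1 (Finset.mem_Icc.mp (hS hi)).2
  have h3 : ((k + 1 : ℕ) : ℝ) ≤ ((S \ Finset.Icc 1 k).card : ℝ) := by exact_mod_cast hcard
  have h4 := mul_le_mul_of_nonneg_right h3 (hnonneg (k + 1) (by omega) hk1)
  rw [nsmul_eq_mul] at h1
  linarith
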